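/- arXiv:cs/0201008 — 2 statements merged into one kernel-verified Lean document; each statement's English description precedes it below -/
import Mathlib

section
/- Deterministic, non-deterministic, and generalised finite string tree automata recognise the same class of string tree languages: a language L ⊆ T(Σ) is recognised by some GNFSTA over Σ if and only if it is recognised by some NFSTA, if and only if it is recognised (after the injective alphabet renaming a ↦ {a}) by some DFSTA. -/
/-!  Common definitions: string trees over an alphabet (following
N. Schmidt, A. Patel, "Using Tree Automata and Regular Expressions to
Manipulate Hierarchically Structured Data").

Symbols: an ambient type `U` of "plain" symbols, extended with the two
angle brackets and the slash. -/

inductive TSym (U : Type) : Type where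
  | op : TSym U          -- ⟨
  | cl : TSym U          -- ⟩
  | slash : TSym U       -- /
  | ltr : U → TSym U     -- a plain symbol

namespace StringTree

variable {U V : Type}

/-- The letters of an alphabet `S ⊆ U`, viewed as (non-bracket) symbols. -/
def ltrs (S : Set U) : Set (TSym U) := {x | ∃ a ∈ S, x = TSym.ltr a}

/-- String trees over a set `S` of allowed non-bracket symbols:
`⟨⟩ ∈ T`, `⟨a⟩ ∈ T` for `a ∈ S`, closed under concatenation
`⟨x⟩·⟨y⟩ = ⟨xy⟩` and encapsulation `t ↦ ⟨t⟩`. -/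
inductive IsTree (S : Set (TSym U)) : List (TSym U) → Prop where
  | nil : IsTree S [TSym.op, TSym.cl]
  | single {x : TSym U} : x ∈ S → IsTree S [TSym.op, x, TSym.cl]
  | concat {x y : List (TSym U)} :
      IsTree S (TSym.op :: (x ++ [TSym.cl])) → IsTree S (TSym.op :: (y ++ [TSym.cl])) →
      IsTree S (TSym.op :: ((x ++ y) ++ [TSym.cl]))
  | encap {t : List (TSym U)} : IsTree S t → IsTree S (TSym.op :: (t ++ [TSym.cl]))

/-- `T(Σ)`, the set of string trees over the alphabet `Σ ⊆ U`. -/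
def TreeSet (S : Set U) : Set (List (TSym U)) := {t | IsTree (ltrs S) t}

/-- A plain string, viewed as a string of symbols. -/
def strOf (s : List U) : List (TSym U) := s.map TSym.ltr

/-- Move relation of a generalised non-deterministic finite string tree
automaton with initial states `Q0`, horizontal rules `Δ` and vertical
rules `γ`:
(a) `l⟨s⟩r ⇒ l⟨a/s⟩r` if `a ∈ Q0` (initial state assignment);
(b) `l⟨a/bs⟩r ⇒ l⟨c/s⟩r` if `(a,b) → c ∈ Δ` (horizontal move);
(c) `l⟨a/⟩r ⇒ lbr` if `b ∈ γ a` (vertical move). -/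
inductive GMove (Q0 : Set U) (Δ : Set (U × U × U)) (γ : U → Set U) :
    List (TSym U) → List (TSym U) → Prop where
  | init {l r : List (TSym U)} {s : List U} {a : U} :
      a ∈ Q0 →
      GMove Q0 Δ γ (l ++ [TSym.op] ++ strOf s ++ [TSym.cl] ++ r)
        (l ++ [TSym.op, TSym.ltr a, TSym.slash] ++ strOf s ++ [TSym.cl] ++ r)
  | horiz {l r : List (TSym U)} {s : List U} {a b c : U} :
      (a, b, c) ∈ Δ →
      GMove Q0 Δ γ (l ++ [TSym.op, TSym.ltr a, TSym.slash, TSym.ltr b] ++ strOf s ++ [TSym.cl] ++ r)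
        (l ++ [TSym.op, TSym.ltr c, TSym.slash] ++ strOf s ++ [TSym.cl] ++ r)
  | vert {l r : List (TSym U)} {a b : U} :
      b ∈ γ a →
      GMove Q0 Δ γ (l ++ [TSym.op, TSym.ltr a, TSym.slash, TSym.cl] ++ r)
        (l ++ [TSym.ltr b] ++ r)

/-- Move relation of an NFSTA: the GNFSTA moves with the single initial
state `q0` and with the vertical move `l⟨a/⟩r ⇒ lar`. -/
def NMove (q0 : U) (Δ : Set (U × U × U)) : List (TSym U) → List (TSym U) → Prop :=
  GMove {q0} Δ (fun a => {a})

/-- The final tree `⟨q/⟩`. -/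
def finalTree (q : U) : List (TSym U) := [TSym.op, TSym.ltr q, TSym.slash, TSym.cl]

/-- Acceptance by a GNFSTA: `t ⇒* ⟨q_f/⟩` for some `q_f ∈ Q_f`. -/
def GAccepts (Q0 : Set U) (Δ : Set (U × U × U)) (γ : U → Set U) (Qf : Set U)
    (t : List (TSym U)) : Prop :=
  ∃ qf ∈ Qf, Relation.ReflTransGen (GMove Q0 Δ γ) t (finalTree qf)

/-- The language of a GNFSTA: the set of trees of `T(Σ)` it accepts. -/
def GLang (Sa Q0 : Set U) (Δ : Set (U × U × U)) (γ : U → Set U) (Qf : Set U) :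
    Set (List (TSym U)) :=
  {t | t ∈ TreeSet Sa ∧ GAccepts Q0 Δ γ Qf t}

/-- Acceptance by an NFSTA. -/
def NAccepts (q0 : U) (Δ : Set (U × U × U)) (Qf : Set U) (t : List (TSym U)) : Prop :=
  GAccepts {q0} Δ (fun a => {a}) Qf t

/-- The language of an NFSTA. -/
def NLang (Sa : Set U) (q0 : U) (Δ : Set (U × U × U)) (Qf : Set U) : Set (List (TSym U)) :=
  GLang Sa {q0} Δ (fun a => {a}) Qf

/-- Well-formedness of a GNFSTA `(Σ, Q, Q_f, Q₀, Δ, γ)`: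
`Q` is finite, `Σ ⊆ Q`, `Q_f ⊆ Q`, `Q₀ ⊆ Q`, the rules of `Δ` are over `Q`,
and `γ` maps states of `Q` to sets of states of `Q`. -/
def GWF (Sa Q Qf Q0 : Set U) (Δ : Set (U × U × U)) (γ : U → Set U) : Prop :=
  Q.Finite ∧ Sa ⊆ Q ∧ Qf ⊆ Q ∧ Q0 ⊆ Q ∧
    (∀ p ∈ Δ, p.1 ∈ Q ∧ p.2.1 ∈ Q ∧ p.2.2 ∈ Q) ∧ (∀ q ∈ Q, γ q ⊆ Q)

/-- Well-formedness of an NFSTA `(Σ, Q, Q_f, q₀, Δ)`. -/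
def NWF (Sa Q Qf : Set U) (q0 : U) (Δ : Set (U × U × U)) : Prop :=
  Q.Finite ∧ Sa ⊆ Q ∧ Qf ⊆ Q ∧ q0 ∈ Q ∧ ∀ p ∈ Δ, p.1 ∈ Q ∧ p.2.1 ∈ Q ∧ p.2.2 ∈ Q

/-- A GNFSTA has pure states: no horizontal or vertical rule produces a
symbol of `Σ`, no horizontal rule has its state (first) component in `Σ`,
`γ(a) = ∅` for `a ∈ Σ`, and `Q₀ ∪ Q_f ⊆ Q ∖ Σ`. -/
def PureG (Sa Q Qf Q0 : Set U) (Δ : Set (U × U × U)) (γ : U → Set U) : Prop :=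
  (∀ p ∈ Δ, p.1 ∉ Sa ∧ p.2.2 ∉ Sa) ∧ (∀ a ∈ Sa, γ a = ∅) ∧
    (∀ q : U, ∀ p ∈ γ q, p ∉ Sa) ∧ Q0 ⊆ Q \ Sa ∧ Qf ⊆ Q \ Sa

/-- An NFSTA has pure states. -/
def PureN (Sa Q Qf : Set U) (q0 : U) (Δ : Set (U × U × U)) : Prop :=
  (∀ p ∈ Δ, p.1 ∉ Sa ∧ p.2.2 ∉ Sa) ∧ q0 ∈ Q \ Sa ∧ Qf ⊆ Q \ Sa


/-! Additional notions. -/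

/-- `⟨s₀ t₁ s₁ ⋯ tₙ sₙ⟩`: the string tree assembled from a head string `s₀`
and a list of pairs `(tᵢ, sᵢ)` of a subtree and a following string. -/
def flatRep (s0 : List U) (rest : List (List (TSym U) × List U)) : List (TSym U) :=
  TSym.op :: (strOf s0 ++ (rest.map (fun p => p.1 ++ strOf p.2)).flatten ++ [TSym.cl])

/-- The inner string of a tree `⟨x⟩`, i.e. `x`. -/
def innerStr (t : List (TSym U)) : List (TSym U) := (t.drop 1).dropLast

/-- Tree concatenation `⟨x⟩·⟨y⟩ = ⟨xy⟩`. -/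
def tconc (u v : List (TSym U)) : List (TSym U) :=
  TSym.op :: ((innerStr u ++ innerStr v) ++ [TSym.cl])

/-- The null tree `⟨⟩`. -/
def nilTree : List (TSym U) := [TSym.op, TSym.cl]

/-- `w` is a string over `Q ∪ {/}`. -/
def OverQSlash (Q : Set U) (w : List (TSym U)) : Prop :=
  ∀ x ∈ w, x = TSym.slash ∨ ∃ q ∈ Q, x = TSym.ltr q

/-- Renaming of symbols along a map of plain symbols. -/
def symRel (f : U → V) : TSym U → TSym V
  | TSym.op => TSym.op
  | TSym.cl => TSym.cl
  | TSym.slash => TSym.slash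
  | TSym.ltr a => TSym.ltr (f a)

/-- Renaming of the symbols of a tree along a map of plain symbols. -/
def treeRel (f : U → V) (t : List (TSym U)) : List (TSym V) := t.map (symRel f)

/-- The injective renaming `a ↦ {a}`. -/
def sing : U → Set U := fun a => {a}

/-- The vertical-rule function `γ` of a pure-state GNFSTA, extended by
`γ(a) = {a}` for `a ∈ Σ` and to sets by unions: `γ(b') = ⋃_{b ∈ b'} γ(b)`. -/
def gammaExt (Sa : Set U) (γ : U → Set U) (b' : Set U) : Set U :=
  {c | ∃ b ∈ b', c ∈ γ b ∨ (c = b ∧ b ∈ Sa)}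

/-- The transition function of the subset construction:
`Δ'(a', b') = {c | (a,b) → c ∈ Δ, a ∈ a', b ∈ γ(b')}`. -/
def subsetDelta (Sa : Set U) (γ : U → Set U) (Δ : Set (U × U × U)) (a' b' : Set U) : Set U :=
  {c | ∃ a ∈ a', ∃ b ∈ gammaExt Sa γ b', (a, b, c) ∈ Δ}

/-- The rule set of the subset-construction DFSTA, defined on pairs of
subsets of `Q`. -/
def subsetRules (Sa : Set U) (γ : U → Set U) (Δ : Set (U × U × U)) (Q : Set U) :
    Set (Set U × Set U × Set U) :=
  {x | x.1 ⊆ Q ∧ x.2.1 ⊆ Q ∧ x.2.2 = subsetDelta Sa γ Δ x.1 x.2.1}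

/-- A rule set is deterministic: at most one rule per left-hand side. -/
def Deterministic {α : Type} (Δ : Set (α × α × α)) : Prop :=
  ∀ a b c₁ c₂, (a, b, c₁) ∈ Δ → (a, b, c₂) ∈ Δ → c₁ = c₂

/-- `L` is recognised by some GNFSTA over the alphabet `Sa`. -/
def RecogG (Sa : Set U) (L : Set (List (TSym U))) : Prop :=
  ∃ Q Qf Q0 Δ γ, GWF Sa Q Qf Q0 Δ γ ∧ GLang Sa Q0 Δ γ Qf = L

/-- `L` is recognised by some NFSTA over the alphabet `Sa`. -/
def RecogN (Sa : Set U) (L : Set (List (TSym U))) : Prop :=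
  ∃ Q Qf q0 Δ, NWF Sa Q Qf q0 Δ ∧ NLang Sa q0 Δ Qf = L

/-- `L` is recognised, after the injective alphabet renaming `a ↦ {a}`,
by some deterministic FSTA. -/
def RecogD (Sa : Set U) (L : Set (List (TSym U))) : Prop :=
  ∃ (Q' Qf' : Set (Set U)) (q0' : Set U) (Δ' : Set (Set U × Set U × Set U)),
    NWF (sing '' Sa) Q' Qf' q0' Δ' ∧ Deterministic Δ' ∧
    NLang (sing '' Sa) q0' Δ' Qf' = treeRel sing '' L

/-- Runs of a classical finite (string) automaton with transition map `δ`. -/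
inductive FASteps (δ : U → U → Set U) : U → List U → U → Prop where
  | nil (q : U) : FASteps δ q [] q
  | cons {q a p s q'} : p ∈ δ q a → FASteps δ p s q' → FASteps δ q (a :: s) q'

/-- The language of a classical finite automaton `(Sa, Q, Q_f, q₀, δ)`. -/
def FALang (Sa : Set U) (δ : U → U → Set U) (q0 : U) (Qf : Set U) : Set (List U) :=
  {s | (∀ a ∈ s, a ∈ Sa) ∧ ∃ qf ∈ Qf, FASteps δ q0 s qf}

/-- `n`-fold composition of a relation: `relPow r n a b` iff `a ⇒ⁿ b`. -/
def relPow {α : Type} (r : α → α → Prop) : ℕ → α → α → Prop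
  | 0, a, b => a = b
  | n + 1, a, c => ∃ b, r a b ∧ relPow r n b c


/-! Ranked terms and classical tree automata. -/

/-- Unranked terms (rose trees) over a symbol type `F`. -/
inductive PreTerm (F : Type) : Type where
  | node : F → List (PreTerm F) → PreTerm F

/-- A term is well-ranked w.r.t. an arity function. -/
inductive WellRanked {F : Type} (ar : F → ℕ) : PreTerm F → Prop where
  | node {f : F} {ts : List (PreTerm F)} : ts.length = ar f →
      (∀ t ∈ ts, WellRanked ar t) → WellRanked ar (PreTerm.node f ts)

/-- The term-to-string-tree map `τ`:
`τ(f(t₁,…,t_p)) = ⟨f τ(t₁) ⋯ τ(t_p)⟩` (and `τ(a) = ⟨a⟩` for constants). -/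
def tau {F : Type} : PreTerm F → List (TSym F)
  | PreTerm.node f ts =>
      TSym.op :: TSym.ltr f :: ((ts.attach.map (fun x => tau x.1)).flatten ++ [TSym.cl])
  decreasing_by
    simp only [PreTerm.node.sizeOf_spec]
    have h := List.sizeOf_lt_of_mem x.2
    omega

/-- A term over the ranked alphabet given by symbols `Sa` and arities `ar`. -/
inductive GoodTerm (Sa : Set U) (ar : U → ℕ) : PreTerm U → Prop where
  | node {f : U} {ts : List (PreTerm U)} : f ∈ Sa → ts.length = ar f →
      (∀ t ∈ ts, GoodTerm Sa ar t) → GoodTerm Sa ar (PreTerm.node f ts)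

/-- Bottom-up runs of a classical tree automaton with rules
`f(q₁,…,qₙ) → q`: `CRun Δh t q` means the run assigns state `q` to `t`. -/
inductive CRun (Δh : Set (U × List U × U)) : PreTerm U → U → Prop where
  | node {f : U} {ts : List (PreTerm U)} {qs : List U} {q : U} :
      (f, qs, q) ∈ Δh → qs.length = ts.length →
      (∀ p ∈ ts.zip qs, CRun Δh p.1 p.2) →
      CRun Δh (PreTerm.node f ts) q

/-- The term language of a classical tree automaton. -/
def TermLang (Sa : Set U) (ar : U → ℕ) (Δh : Set (U × List U × U)) (Qhf : Set U) :
    Set (PreTerm U) :=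
  {t | GoodTerm Sa ar t ∧ ∃ q ∈ Qhf, CRun Δh t q}

/-! Vertical tree representation of strings. -/

def omegaRev : List U → List (TSym U)
  | [] => [TSym.op, TSym.cl]
  | a :: s => TSym.op :: (omegaRev s ++ [TSym.ltr a, TSym.cl])

/-- The vertical tree representation `ω(a₁⋯aₙ) = ⟨⟨⋯⟨⟩a₁⟩a₂⟩⋯aₙ⟩`,
defined by `ω(ε) = ⟨⟩` and `ω(sa) = ⟨ω(s)⟩·⟨a⟩`. -/
def omega (s : List U) : List (TSym U) := omegaRev s.reverse

/-! Regular string tree grammars. -/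

/-- A regular expression is over the symbol set `S`. -/
def REOver (S : Set U) : RegularExpression U → Prop
  | RegularExpression.zero => True
  | RegularExpression.epsilon => True
  | RegularExpression.char a => a ∈ S
  | RegularExpression.plus e₁ e₂ => REOver S e₁ ∧ REOver S e₂
  | RegularExpression.comp e₁ e₂ => REOver S e₁ ∧ REOver S e₂
  | RegularExpression.star e => REOver S e

/-- One derivation step of a regular string tree grammar with rule set `R`:
`lXr →_G l⟨x⟩r` whenever `X → ⟨e⟩ ∈ R` and `x ∈ ⟦e⟧`. -/
def GDeriv (R : Set (U × RegularExpression U)) (u v : List (TSym U)) : Prop :=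
  ∃ (l r : List (TSym U)) (X : U) (e : RegularExpression U) (x : List U),
    (X, e) ∈ R ∧ x ∈ e.matches' ∧
    u = l ++ [TSym.ltr X] ++ r ∧ v = l ++ (TSym.op :: (strOf x ++ [TSym.cl])) ++ r

/-- The language generated by a regular string tree grammar with axiom `S`:
all trees of `T(Σ)` derivable from `S`. -/
def GramLang (Sa : Set U) (S : U) (R : Set (U × RegularExpression U)) :
    Set (List (TSym U)) :=
  {t | t ∈ TreeSet Sa ∧ Relation.ReflTransGen (GDeriv R) [TSym.ltr S] t}

/-- Well-formedness of a regular string tree grammar `(Σ, N, S, R)`. -/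
def GramWF (Sa N : Set U) (S : U) (R : Set (U × RegularExpression U)) : Prop :=
  N.Finite ∧ Disjoint N Sa ∧ S ∈ N ∧ ∀ p ∈ R, p.1 ∈ N ∧ REOver (Sa ∪ N) p.2

/-! The map `Γ` and the instance relation `⊴` of the subset-construction
equivalence proof. -/

/-- `Γ` applies (the extension of) `γ` to every set-symbol that is not
immediately followed by a slash:
`Γ(ε)=ε`, `Γ(⟨s)=⟨Γ(s)`, `Γ(⟩s)=⟩Γ(s)`, `Γ(a/s)=a/Γ(s)`, `Γ(as)=γ(a)Γ(s)`. -/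
def GammaMap (g : Set U → Set U) : List (TSym (Set U)) → List (TSym (Set U))
  | [] => []
  | TSym.op :: s => TSym.op :: GammaMap g s
  | TSym.cl :: s => TSym.cl :: GammaMap g s
  | TSym.slash :: s => TSym.slash :: GammaMap g s
  | TSym.ltr a :: TSym.slash :: s => TSym.ltr a :: TSym.slash :: GammaMap g s
  | TSym.ltr a :: s => TSym.ltr (g a) :: GammaMap g s

/-- Symbol-wise instance relation: brackets and slashes match, and a plain
symbol is an element of the corresponding set-symbol. -/
inductive SymInst : TSym U → TSym (Set U) → Prop where
  | op : SymInst TSym.op TSym.op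
  | cl : SymInst TSym.cl TSym.cl
  | slash : SymInst TSym.slash TSym.slash
  | ltr {a : U} {A : Set U} : a ∈ A → SymInst (TSym.ltr a) (TSym.ltr A)

/-- `v ⊴ v'`: `v` is an instance of `v'`. -/
def Inst (v : List (TSym U)) (v' : List (TSym (Set U))) : Prop :=
  List.Forall₂ SymInst v v'

end StringTree

namespace StringTree

/-!
The semantics of an automaton on a tree `⟨x⟩` is the *reach map* of its inner string `x`: it sends
a set `A` of states to the set of states to which the automaton can get from a state of `A` by
reading `x` from left to right, where a subtree `⟨y⟩` is read as a single letter produced by a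
vertical rule from the states in which `y`, started in an initial state, can end.

Evaluating subtrees innermost first, moves realise every state of the reach map. Conversely, a
stack machine assigns a set of states to *every* string of symbols, including those that are not
trees, and a move can only shrink this set; on a tree the machine computes the reach map.

The reach map is deterministic on sets of states, so it is computed by a DFSTA whose states are the
sets of states; letters are kept apart from these by a disjoint union. Since an automaton has only
finitely many states, they can be renamed injectively into any infinite type, with the images of
the letters prescribed.
-/

theorem forall₂_trans {α : Type*} {r : α → α → Prop} [IsTrans α r] {l₁ l₂ l₃ : List α}
    (h₁₂ : List.Forall₂ r l₁ l₂) (h₂₃ : List.Forall₂ r l₂ l₃) : List.Forall₂ r l₁ l₃ := by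
  induction h₁₂ generalizing l₃ with
  | nil => exact h₂₃
  | cons hab _ ih =>
    cases h₂₃ with
    | cons hbc h₂₃ => exact .cons (_root_.trans hab hbc) (ih h₂₃)

theorem exists_injOn_eqOn {α β : Type*} [Infinite β] {s t : Set α} (ht : t.Finite) (hst : s ⊆ t)
    {f : α → β} (hf : Set.InjOn f s) : ∃ e : α → β, Set.InjOn e t ∧ Set.EqOn e f s := by
  classical
  have hcard : (t \ s).encard ≤ (f '' s)ᶜ.encard := by
    simp [((ht.subset hst).image f).infinite_compl.encard_eq]
  obtain ⟨g, hg, hginj⟩ := ht.sdiff.exists_injOn_of_encard_le hcard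
  have hef : Set.EqOn (s.piecewise f g) f s := Set.piecewise_eqOn s f g
  have heg : Set.EqOn (s.piecewise f g) g (t \ s) :=
    (Set.piecewise_eqOn_compl s f g).mono fun _ hx => hx.2
  refine ⟨s.piecewise f g, ?_, hef⟩
  rw [← Set.union_sdiff_cancel hst, Set.injOn_union Set.disjoint_sdiff_right]
  refine ⟨hf.congr hef.symm, hginj.congr heg.symm, fun a ha b hb hab => hg hb ?_⟩
  rw [hef ha, heg hb] at hab
  exact ⟨a, ha, hab⟩

section Renaming

variable {U V W : Type}

theorem symRel_id : symRel (id : U → U) = id := by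
  funext x
  cases x <;> rfl

theorem symRel_comp (g : V → W) (f : U → V) : symRel (g ∘ f) = symRel g ∘ symRel f := by
  funext x
  cases x <;> rfl

theorem treeRel_id : treeRel (id : U → U) = id := by
  funext t
  simp [treeRel, symRel_id]

theorem treeRel_comp (g : V → W) (f : U → V) : treeRel (g ∘ f) = treeRel g ∘ treeRel f := by
  funext t
  simp [treeRel, symRel_comp]

end Renaming

/-- Abstract syntax of the inner string `x` of a string tree `⟨x⟩`: a sequence of letters
(`leaf`) and subtrees (`node`). -/
inductive Forest (U : Type) : Type where
  | nil : Forest U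
  | leaf : U → Forest U → Forest U
  | node : Forest U → Forest U → Forest U

namespace Forest

variable {U V : Type}

/-- The string of symbols denoted by a forest. -/
def enc : Forest U → List (TSym U)
  | nil => []
  | leaf a F => TSym.ltr a :: F.enc
  | node F G => TSym.op :: (F.enc ++ TSym.cl :: G.enc)

/-- The string tree with a given inner forest. -/
def tree (F : Forest U) : List (TSym U) := TSym.op :: (F.enc ++ [TSym.cl])

/-- The forest is over the alphabet `S`. -/
def Over (S : Set U) : Forest U → Prop
  | nil => True
  | leaf a F => a ∈ S ∧ F.Over S
  | node F G => F.Over S ∧ G.Over S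

/-- Concatenation of forests. -/
def append : Forest U → Forest U → Forest U
  | nil, H => H
  | leaf a F, H => leaf a (F.append H)
  | node F G, H => node F (G.append H)

/-- Renaming of the letters of a forest. -/
def map (f : U → V) : Forest U → Forest V
  | nil => nil
  | leaf a F => leaf (f a) (F.map f)
  | node F G => node (F.map f) (G.map f)

theorem enc_append (F H : Forest U) : (F.append H).enc = F.enc ++ H.enc := by
  induction F with
  | nil => rfl
  | leaf a F ih => simp [append, enc, ih]
  | node F G _ ih => simp [append, enc, ih]

theorem enc_map (f : U → V) (F : Forest U) : (F.map f).enc = treeRel f F.enc := by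
  induction F with
  | nil => rfl
  | leaf a F ih => simp [map, enc, ih, treeRel, symRel]
  | node F G ihF ihG => simp [map, enc, ihF, ihG, treeRel, symRel]

theorem tree_map (f : U → V) (F : Forest U) : (F.map f).tree = treeRel f F.tree := by
  simp [tree, enc_map, treeRel, symRel]

theorem map_congr {S : Set U} {f g : U → V} (hfg : Set.EqOn f g S) {F : Forest U}
    (hF : F.Over S) : F.map f = F.map g := by
  induction F with
  | nil => rfl
  | leaf a F ih => rw [map, map, hfg hF.1, ih hF.2]
  | node F G ihF ihG => rw [map, map, ihF hF.1, ihG hF.2]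

theorem Over.append {S : Set U} {F H : Forest U} (hF : F.Over S) (hH : H.Over S) :
    (F.append H).Over S := by
  induction F with
  | nil => exact hH
  | leaf a F ih => exact ⟨hF.1, ih hF.2⟩
  | node F G _ ih => exact ⟨hF.1, ih hF.2⟩

theorem over_image_iff {S : Set U} {f : U → V} {F : Forest V} :
    F.Over (f '' S) ↔ ∃ G : Forest U, G.Over S ∧ G.map f = F := by
  constructor
  · intro hF
    induction F with
    | nil => exact ⟨nil, trivial, rfl⟩
    | leaf a F ih =>
      obtain ⟨⟨b, hb, rfl⟩, hF⟩ := hF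
      obtain ⟨G, hG, rfl⟩ := ih hF
      exact ⟨leaf b G, ⟨hb, hG⟩, rfl⟩
    | node F F' ihF ihF' =>
      obtain ⟨G, hG, rfl⟩ := ihF hF.1
      obtain ⟨G', hG', rfl⟩ := ihF' hF.2
      exact ⟨node G G', ⟨hG, hG'⟩, rfl⟩
  · rintro ⟨G, hG, rfl⟩
    induction G with
    | nil => trivial
    | leaf b G ih => exact ⟨⟨b, hG.1, rfl⟩, ih hG.2⟩
    | node G G' ihG ihG' => exact ⟨ihG hG.1, ihG' hG.2⟩

theorem Over.tree_mem_treeSet {S : Set U} {F : Forest U} (hF : F.Over S) :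
    F.tree ∈ TreeSet S := by
  induction F with
  | nil => exact IsTree.nil
  | leaf a F ih => exact IsTree.concat (x := [TSym.ltr a]) (.single ⟨a, hF.1, rfl⟩) (ih hF.2)
  | node F G ihF ihG =>
    simpa [TreeSet, tree, enc] using IsTree.concat (.encap (ihF hF.1)) (ihG hF.2)

theorem exists_tree_eq_of_mem_treeSet {S : Set U} {t : List (TSym U)} (ht : t ∈ TreeSet S) :
    ∃ F : Forest U, F.Over S ∧ F.tree = t := by
  induction ht with
  | nil => exact ⟨nil, trivial, rfl⟩
  | single hx =>
    obtain ⟨a, ha, rfl⟩ := hx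
    exact ⟨leaf a nil, ⟨ha, trivial⟩, rfl⟩
  | concat _ _ ihx ihy =>
    obtain ⟨F, hF, hx⟩ := ihx
    obtain ⟨G, hG, hy⟩ := ihy
    simp only [tree, List.cons.injEq, true_and, List.append_cancel_right_eq] at hx hy
    exact ⟨F.append G, hF.append hG, by rw [tree, enc_append, hx, hy]⟩
  | encap _ ih =>
    obtain ⟨F, hF, rfl⟩ := ih
    exact ⟨node F nil, ⟨hF, trivial⟩, by simp [tree, enc]⟩

end Forest

theorem treeRel_eqOn_treeSet {U V : Type} {S : Set U} {f g : U → V} (hfg : Set.EqOn f g S) :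
    Set.EqOn (treeRel f) (treeRel g) (TreeSet S) := by
  intro t ht
  obtain ⟨F, hF, rfl⟩ := Forest.exists_tree_eq_of_mem_treeSet ht
  rw [← F.tree_map, ← F.tree_map, Forest.map_congr hfg hF]

/-- The data of a GNFSTA other than its alphabet and its set of states, on which neither the moves
nor acceptance depend; see `Automaton.WF` for these. -/
structure Automaton (U : Type) where
  init : Set U
  rules : Set (U × U × U)
  vert : U → Set U
  final : Set U

namespace Automaton

variable {U V : Type}

/-- `M` is a GNFSTA with alphabet `Sa` and set of states `Q`. -/
def WF (M : Automaton U) (Sa Q : Set U) : Prop := GWF Sa Q M.final M.init M.rules M.vert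

/-- The language of `M` over the alphabet `Sa`. -/
def language (M : Automaton U) (Sa : Set U) : Set (List (TSym U)) :=
  GLang Sa M.init M.rules M.vert M.final

/-- An NFSTA, viewed as a GNFSTA. -/
def ofNFSTA (q0 : U) (Δ : Set (U × U × U)) (Qf : Set U) : Automaton U where
  init := {q0}
  rules := Δ
  vert a := {a}
  final := Qf

/-- The set of states reached from a state of `A` by reading a letter of `B`. -/
def horizSet (M : Automaton U) (A B : Set U) : Set U :=
  {c | ∃ a ∈ A, ∃ b ∈ B, (a, b, c) ∈ M.rules}

/-- The set of letters by which a bracket `⟨q/⟩` with `q ∈ A` can be replaced. -/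
def vertSet (M : Automaton U) (A : Set U) : Set U := ⋃ a ∈ A, M.vert a

theorem vertSet_ofNFSTA (q0 : U) (Δ : Set (U × U × U)) (Qf A : Set U) :
    (ofNFSTA q0 Δ Qf).vertSet A = A :=
  Set.biUnion_of_singleton A

/-- The set of states reached from a state of `A` by reading a forest. -/
def reach (M : Automaton U) : Forest U → Set U → Set U
  | .nil, A => A
  | .leaf a F, A => M.reach F (M.horizSet A {a})
  | .node F G, A => M.reach G (M.horizSet A (M.vertSet (M.reach F M.init)))

/-- The moves of `M`. -/
abbrev Move (M : Automaton U) : List (TSym U) → List (TSym U) → Prop :=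
  GMove M.init M.rules M.vert

/-- The reflexive transitive closure `⇒*` of the moves of `M`. -/
abbrev Reduces (M : Automaton U) : List (TSym U) → List (TSym U) → Prop :=
  Relation.ReflTransGen M.Move

variable {M : Automaton U}

section Completeness

theorem Move.context {x y : List (TSym U)} (h : M.Move x y) (l r : List (TSym U)) :
    M.Move (l ++ x ++ r) (l ++ y ++ r) := by
  cases h with
  | @init l' r' s a ha =>
    simpa using GMove.init (Δ := M.rules) (γ := M.vert) (l := l ++ l') (r := r' ++ r) (s := s) ha
  | @horiz l' r' s a b c hΔ =>
    simpa using GMove.horiz (Q0 := M.init) (γ := M.vert) (l := l ++ l') (r := r' ++ r) (s := s) hΔ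
  | @vert l' r' a b hb =>
    simpa using GMove.vert (Q0 := M.init) (Δ := M.rules) (l := l ++ l') (r := r' ++ r) hb

theorem Reduces.context {x y : List (TSym U)} (h : M.Reduces x y) (l r : List (TSym U)) :
    M.Reduces (l ++ x ++ r) (l ++ y ++ r) :=
  h.lift (fun z => l ++ z ++ r) fun _ _ hxy => Move.context hxy l r

theorem reduces_of_mem_init {p q : U} {s : List U} (hp : p ∈ M.init)
    (h : M.Reduces (TSym.op :: TSym.ltr p :: TSym.slash :: (strOf s ++ [TSym.cl])) (finalTree q)) :
    M.Reduces (TSym.op :: (strOf s ++ [TSym.cl])) (finalTree q) := by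
  refine .head ?_ h
  simpa using GMove.init (Δ := M.rules) (γ := M.vert) (l := []) (r := []) (s := s) hp

theorem reduces_of_mem_rules {p a p' q : U} {s : List U} (hΔ : (p, a, p') ∈ M.rules)
    (h : M.Reduces (TSym.op :: TSym.ltr p' :: TSym.slash :: (strOf s ++ [TSym.cl]))
      (finalTree q)) :
    M.Reduces (TSym.op :: TSym.ltr p :: TSym.slash :: (strOf (a :: s) ++ [TSym.cl]))
      (finalTree q) := by
  refine .head ?_ h
  simpa [strOf] using
    GMove.horiz (Q0 := M.init) (γ := M.vert) (l := []) (r := []) (s := s) hΔ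

theorem reduces_node {F G : Forest U} {q b : U} {s : List U} (hF : M.Reduces F.tree (finalTree q))
    (hb : b ∈ M.vert q) (hG : M.Reduces G.enc (strOf s)) :
    M.Reduces (F.node G).enc (strOf (b :: s)) := by
  have hvert : M.Move (finalTree q ++ G.enc) (TSym.ltr b :: G.enc) :=
    GMove.vert (l := []) hb
  have hsubtree := Reduces.context hF [] G.enc
  have hrest := Reduces.context hG [TSym.ltr b] []
  simp only [List.nil_append, List.append_nil, List.singleton_append] at hsubtree hrest
  simpa [Forest.enc, Forest.tree, strOf] using (hsubtree.tail hvert).trans hrest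

theorem reduces_tree {F : Forest U} {p q : U} {s : List U} (hp : p ∈ M.init)
    (hF : M.Reduces F.enc (strOf s))
    (h : M.Reduces (TSym.op :: TSym.ltr p :: TSym.slash :: (strOf s ++ [TSym.cl])) (finalTree q)) :
    M.Reduces F.tree (finalTree q) := by
  have hinner := Reduces.context hF [TSym.op] [TSym.cl]
  exact .trans hinner (reduces_of_mem_init hp h)

theorem exists_reduces_of_mem_reach {F : Forest U} {A : Set U} {q : U} (hq : q ∈ M.reach F A) :
    ∃ s : List U, M.Reduces F.enc (strOf s) ∧ ∃ p ∈ A,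
      M.Reduces (TSym.op :: TSym.ltr p :: TSym.slash :: (strOf s ++ [TSym.cl])) (finalTree q) := by
  induction F generalizing A q with
  | nil => exact ⟨[], .refl, q, hq, .refl⟩
  | leaf _ F ih =>
    obtain ⟨s, hF, p', ⟨p, hp, a, rfl, hΔ⟩, hp'⟩ := ih hq
    have hleaf : M.Reduces (Forest.leaf a F).enc (strOf (a :: s)) := by
      simpa [Forest.enc, strOf] using Reduces.context hF [TSym.ltr a] []
    exact ⟨a :: s, hleaf, p, hp, reduces_of_mem_rules hΔ hp'⟩
  | node F G ihF ihG =>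
    obtain ⟨s, hG, p', ⟨p, hp, b, hb, hΔ⟩, hp'⟩ := ihG hq
    obtain ⟨q', hq', hb⟩ := Set.mem_iUnion₂.1 hb
    obtain ⟨u, hF, i, hi, hu⟩ := ihF hq'
    exact ⟨b :: s, reduces_node (reduces_tree hi hF hu) hb hG, p, hp, reduces_of_mem_rules hΔ hp'⟩

end Completeness

section Soundness

/-- One step of a stack machine reading a string of symbols. The stack has a frame `(A, B)` for
every open bracket: `A` is the set of possible current states, and `B` the set of possible values
of the last letter read, which a following slash turns into the current state. The outermost
bracket is never reduced, and a letter outside all brackets yields the least one-frame stack, so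
that no move `x ⇒ y` makes the stack of `y` exceed that of `x`. -/
def scanStep (M : Automaton U) : List (Set U × Set U) → TSym U → List (Set U × Set U)
  | S, TSym.op => (M.init, ∅) :: S
  | [], TSym.ltr _ => [(∅, ∅)]
  | (A, _) :: S, TSym.ltr b => (M.horizSet A {b}, {b}) :: S
  | [], TSym.slash => []
  | (_, B) :: S, TSym.slash => (B, ∅) :: S
  | (A, _) :: (A', _) :: S, TSym.cl => (M.horizSet A' (M.vertSet A), M.vertSet A) :: S
  | S, TSym.cl => S

/-- The stack reached from `S` by reading `w`. -/
def scan (M : Automaton U) (S : List (Set U × Set U)) (w : List (TSym U)) :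
    List (Set U × Set U) :=
  w.foldl M.scanStep S

theorem horizSet_mono {A A' B B' : Set U} (hA : A ⊆ A') (hB : B ⊆ B') :
    M.horizSet A B ⊆ M.horizSet A' B' :=
  fun _ ⟨a, ha, b, hb, hΔ⟩ => ⟨a, hA ha, b, hB hb, hΔ⟩

theorem vertSet_mono {A A' : Set U} (hA : A ⊆ A') : M.vertSet A ⊆ M.vertSet A' :=
  Set.biUnion_subset_biUnion_left hA

theorem scanStep_mono {S T : List (Set U × Set U)} (h : List.Forall₂ (· ≤ ·) S T) (x : TSym U) :
    List.Forall₂ (· ≤ ·) (M.scanStep S x) (M.scanStep T x) := by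
  cases x with
  | op => exact .cons le_rfl h
  | cl =>
    cases h with
    | nil => exact .nil
    | cons hA h =>
      cases h with
      | nil => exact .cons hA .nil
      | cons hA' h =>
        exact .cons ⟨horizSet_mono hA'.1 (vertSet_mono hA.1), vertSet_mono hA.1⟩ h
  | slash =>
    cases h with
    | nil => exact .nil
    | cons hA h => exact .cons ⟨hA.2, le_rfl⟩ h
  | ltr b =>
    cases h with
    | nil => exact .cons le_rfl .nil
    | cons hA h => exact .cons ⟨horizSet_mono hA.1 subset_rfl, le_rfl⟩ h

theorem scan_mono {S T : List (Set U × Set U)} (h : List.Forall₂ (· ≤ ·) S T)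
    (w : List (TSym U)) : List.Forall₂ (· ≤ ·) (M.scan S w) (M.scan T w) :=
  List.foldl_rel h fun x _ _ _ hST => scanStep_mono hST x

theorem Move.scan_le {x y : List (TSym U)} (h : M.Move x y) (S : List (Set U × Set U)) :
    List.Forall₂ (· ≤ ·) (M.scan S y) (M.scan S x) := by
  have hle (T : List (Set U × Set U)) : List.Forall₂ (· ≤ ·) T T :=
    List.forall₂_refl T
  cases h with
  | @init l r s a ha =>
    simp only [scan, List.append_assoc, List.foldl_append]
    have hframe : (({a}, ∅) : Set U × Set U) ≤ (M.init, ∅) :=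
      ⟨Set.singleton_subset_iff.2 ha, le_rfl⟩
    exact scan_mono (scan_mono (scan_mono (.cons hframe (hle _)) _) _) _
  | @horiz l r s a b c hΔ =>
    simp only [scan, List.append_assoc, List.foldl_append]
    have hframe : (({c}, ∅) : Set U × Set U) ≤ (M.horizSet {a} {b}, {b}) :=
      ⟨by simpa [horizSet] using hΔ, Set.empty_subset _⟩
    exact scan_mono (scan_mono (scan_mono (.cons hframe (hle _)) _) _) _
  | @vert l r a b hb =>
    simp only [scan, List.append_assoc, List.foldl_append]
    have hb' : {b} ⊆ M.vertSet {a} := by simpa [vertSet] using hb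
    refine scan_mono ?_ r
    cases l.foldl M.scanStep S with
    | nil => exact .cons ⟨Set.empty_subset _, le_rfl⟩ .nil
    | cons P T => exact .cons ⟨horizSet_mono subset_rfl hb', hb'⟩ (hle _)

theorem Reduces.scan_le {x y : List (TSym U)} (h : M.Reduces x y) (S : List (Set U × Set U)) :
    List.Forall₂ (· ≤ ·) (M.scan S y) (M.scan S x) := by
  induction h with
  | refl => exact List.forall₂_refl _
  | tail _ hmove ih => exact forall₂_trans (Move.scan_le hmove S) ih

theorem exists_scan_enc_eq (F : Forest U) (A B : Set U) (S : List (Set U × Set U)) :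
    ∃ B', M.scan ((A, B) :: S) F.enc = (M.reach F A, B') :: S := by
  induction F generalizing A B S with
  | nil => exact ⟨B, rfl⟩
  | leaf _ _ ih => exact ih ..
  | node F G ihF ihG =>
    obtain ⟨B₁, hF⟩ := ihF M.init ∅ ((A, B) :: S)
    obtain ⟨B₂, hG⟩ := ihG (M.horizSet A (M.vertSet (M.reach F M.init)))
      (M.vertSet (M.reach F M.init)) S
    refine ⟨B₂, ?_⟩
    rw [reach, ← hG]
    simp only [scan] at hF
    simp [scan, Forest.enc, scanStep, hF]

theorem exists_scan_tree_eq (F : Forest U) : ∃ B, M.scan [] F.tree = [(M.reach F M.init, B)] := by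
  obtain ⟨B, hF⟩ := exists_scan_enc_eq (M := M) F M.init ∅ []
  refine ⟨B, ?_⟩
  simp only [scan] at hF
  simp [scan, Forest.tree, scanStep, hF]

theorem mem_reach_of_reduces {F : Forest U} {q : U} (h : M.Reduces F.tree (finalTree q)) :
    q ∈ M.reach F M.init := by
  obtain ⟨B, hF⟩ := exists_scan_tree_eq (M := M) F
  have hle := Reduces.scan_le h []
  rw [hF] at hle
  exact (List.forall₂_cons.1 hle).1.1 rfl

end Soundness

theorem reduces_finalTree_iff {F : Forest U} {q : U} :
    M.Reduces F.tree (finalTree q) ↔ q ∈ M.reach F M.init := by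
  refine ⟨mem_reach_of_reduces, fun hq => ?_⟩
  obtain ⟨s, hF, p, hp, hs⟩ := exists_reduces_of_mem_reach hq
  exact reduces_tree hp hF hs

theorem mem_language_iff {Sa : Set U} {t : List (TSym U)} :
    t ∈ M.language Sa ↔
      ∃ F : Forest U, F.Over Sa ∧ F.tree = t ∧ (M.reach F M.init ∩ M.final).Nonempty := by
  constructor
  · rintro ⟨ht, q, hqf, h⟩
    obtain ⟨F, hF, rfl⟩ := Forest.exists_tree_eq_of_mem_treeSet ht
    exact ⟨F, hF, rfl, q, reduces_finalTree_iff.1 h, hqf⟩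
  · rintro ⟨F, hF, rfl, q, hq, hqf⟩
    exact ⟨hF.tree_mem_treeSet, q, hqf, reduces_finalTree_iff.2 hq⟩

namespace WF

variable {Sa Q : Set U}

theorem finite_states (hM : M.WF Sa Q) : Q.Finite := hM.1

theorem alphabet_subset (hM : M.WF Sa Q) : Sa ⊆ Q := hM.2.1

theorem final_subset (hM : M.WF Sa Q) : M.final ⊆ Q := hM.2.2.1

theorem init_subset (hM : M.WF Sa Q) : M.init ⊆ Q := hM.2.2.2.1

theorem rules_subset (hM : M.WF Sa Q) {a b c : U} (h : (a, b, c) ∈ M.rules) :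
    a ∈ Q ∧ b ∈ Q ∧ c ∈ Q :=
  hM.2.2.2.2.1 _ h

theorem horizSet_subset (hM : M.WF Sa Q) (A B : Set U) : M.horizSet A B ⊆ Q :=
  fun _ ⟨_, _, _, _, hΔ⟩ => (hM.rules_subset hΔ).2.2

theorem reach_subset (hM : M.WF Sa Q) (F : Forest U) {A : Set U} (hA : A ⊆ Q) :
    M.reach F A ⊆ Q := by
  induction F generalizing A with
  | nil => exact hA
  | leaf _ _ ih => exact ih (hM.horizSet_subset _ _)
  | node _ _ _ ih => exact ih (hM.horizSet_subset _ _)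

end WF

/-- `φ` maps sets of states of `M` to sets of states of `N` in such a way that the reach map of `N`
on forests renamed by `f` corresponds to the reach map of `M`, and acceptance is preserved. Both
the subset construction and the injective renamings of states are of this kind. -/
structure IsSimulation (M : Automaton U) (N : Automaton V) (Sa Q : Set U) (f : U → V)
    (φ : Set U → Set V) : Prop where
  init : N.init = φ M.init
  horizSet_letter : ∀ A ⊆ Q, ∀ a ∈ Sa, N.horizSet (φ A) {f a} = φ (M.horizSet A {a})
  horizSet_vertSet : ∀ A ⊆ Q, ∀ C ⊆ Q,
    N.horizSet (φ A) (N.vertSet (φ C)) = φ (M.horizSet A (M.vertSet C))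
  final : ∀ A ⊆ Q, (φ A ∩ N.final).Nonempty ↔ (A ∩ M.final).Nonempty

namespace IsSimulation

variable {N : Automaton V} {Sa Q : Set U} {f : U → V} {φ : Set U → Set V}

theorem reach_map (h : IsSimulation M N Sa Q f φ) (hM : M.WF Sa Q) {F : Forest U}
    (hF : F.Over Sa) {A : Set U} (hA : A ⊆ Q) : N.reach (F.map f) (φ A) = φ (M.reach F A) := by
  induction F generalizing A with
  | nil => rfl
  | leaf a F ih =>
    rw [Forest.map, reach, h.horizSet_letter A hA a hF.1, ih hF.2 (hM.horizSet_subset _ _), reach]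
  | node F G ihF ihG =>
    rw [Forest.map, reach, h.init, ihF hF.1 hM.init_subset,
      h.horizSet_vertSet A hA _ (hM.reach_subset F hM.init_subset),
      ihG hF.2 (hM.horizSet_subset _ _), reach]

theorem language_image (h : IsSimulation M N Sa Q f φ) (hM : M.WF Sa Q) :
    N.language (f '' Sa) = treeRel f '' M.language Sa := by
  have haccept {F : Forest U} (hF : F.Over Sa) :
      (N.reach (F.map f) N.init ∩ N.final).Nonempty ↔
        (M.reach F M.init ∩ M.final).Nonempty := by
    rw [h.init, h.reach_map hM hF hM.init_subset, h.final _ (hM.reach_subset F hM.init_subset)]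
  ext t
  constructor
  · intro ht
    obtain ⟨F', hF', rfl, hacc⟩ := mem_language_iff.1 ht
    obtain ⟨F, hF, rfl⟩ := Forest.over_image_iff.1 hF'
    exact ⟨F.tree, mem_language_iff.2 ⟨F, hF, rfl, (haccept hF).1 hacc⟩, (F.tree_map f).symm⟩
  · rintro ⟨_, ht, rfl⟩
    obtain ⟨F, hF, rfl, hacc⟩ := mem_language_iff.1 ht
    exact mem_language_iff.2
      ⟨F.map f, Forest.over_image_iff.2 ⟨F, hF, rfl⟩, F.tree_map f, (haccept hF).2 hacc⟩

end IsSimulation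

end Automaton

/-- `L` is recognised by some DFSTA over the alphabet `Sa`; thus `RecogD Sa L` says that
`treeRel sing '' L` is recognised by some DFSTA over `sing '' Sa`. -/
def RecogDet {U : Type} (Sa : Set U) (L : Set (List (TSym U))) : Prop :=
  ∃ Q Qf q0 Δ, NWF Sa Q Qf q0 Δ ∧ Deterministic Δ ∧ NLang Sa q0 Δ Qf = L

section SubsetConstruction

variable {U : Type}

namespace Automaton

/-- The letters by which a symbol of the subset automaton can be replaced: a letter stands for
itself, a set of states for the results of the vertical rules. -/
def symbolSet (M : Automaton U) : U ⊕ Set U → Set U :=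
  Sum.elim (fun a => {a}) M.vertSet

/-- The symbols of the subset automaton: letters of `Sa` and sets of states from `Q`, kept apart
by a disjoint union so that `M` need not have pure states. -/
def subsetStates (Sa Q : Set U) : Set (U ⊕ Set U) := Sum.inl '' Sa ∪ Sum.inr '' 𝒫 Q

/-- The rules of the subset automaton. -/
def subsetAutomatonRules (M : Automaton U) (Sa Q : Set U) :
    Set ((U ⊕ Set U) × (U ⊕ Set U) × (U ⊕ Set U)) :=
  {p | ∃ A ⊆ Q, ∃ x ∈ subsetStates Sa Q,
    p = (Sum.inr A, x, Sum.inr (M.horizSet A (M.symbolSet x)))}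

/-- The final states of the subset automaton. -/
def subsetFinal (M : Automaton U) (Q : Set U) : Set (U ⊕ Set U) :=
  Sum.inr '' {A | A ⊆ Q ∧ (A ∩ M.final).Nonempty}

/-- The DFSTA obtained from `M` by the subset construction. -/
def subsetAutomaton (M : Automaton U) (Sa Q : Set U) : Automaton (U ⊕ Set U) :=
  ofNFSTA (Sum.inr M.init) (M.subsetAutomatonRules Sa Q) (M.subsetFinal Q)

variable {M : Automaton U} {Sa Q : Set U}

theorem deterministic_subsetAutomatonRules : Deterministic (M.subsetAutomatonRules Sa Q) := by
  rintro _ _ _ _ ⟨A, -, x, -, h⟩ ⟨A', -, x', -, h'⟩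
  simp only [Prod.mk.injEq] at h h'
  grind

theorem WF.nwf_subsetAutomaton (hM : M.WF Sa Q) :
    NWF (Sum.inl '' Sa) (subsetStates Sa Q) (M.subsetFinal Q) (Sum.inr M.init)
      (M.subsetAutomatonRules Sa Q) := by
  refine ⟨?_, Set.subset_union_left, ?_, .inr ⟨_, hM.init_subset, rfl⟩, ?_⟩
  · exact ((hM.finite_states.subset hM.alphabet_subset).image _).union
      (hM.finite_states.finite_subsets.image _)
  · exact (Set.image_mono fun _ hA => hA.1).trans Set.subset_union_right
  · rintro _ ⟨A, hA, x, hx, rfl⟩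
    exact ⟨.inr ⟨A, hA, rfl⟩, hx, .inr ⟨_, hM.horizSet_subset _ _, rfl⟩⟩

theorem horizSet_subsetAutomaton {A : Set U} (hA : A ⊆ Q) {x : U ⊕ Set U}
    (hx : x ∈ subsetStates Sa Q) :
    (M.subsetAutomaton Sa Q).horizSet {Sum.inr A} {x} =
      {Sum.inr (M.horizSet A (M.symbolSet x))} := by
  ext c
  simp only [horizSet, subsetAutomaton, ofNFSTA, subsetAutomatonRules, Set.mem_singleton_iff,
    exists_eq_left, Set.mem_ofPred_eq, Prod.mk.injEq, Sum.inr.injEq]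
  grind

theorem isSimulation_subsetAutomaton :
    IsSimulation M (M.subsetAutomaton Sa Q) Sa Q Sum.inl (fun A => {Sum.inr A}) where
  init := rfl
  horizSet_letter _ hA a ha := horizSet_subsetAutomaton hA (.inl ⟨a, ha, rfl⟩)
  horizSet_vertSet A hA C hC := by
    rw [subsetAutomaton, vertSet_ofNFSTA]
    exact horizSet_subsetAutomaton hA (.inr ⟨C, hC, rfl⟩)
  final A hA := by simp [subsetAutomaton, ofNFSTA, subsetFinal, hA]

end Automaton

theorem RecogG.recogDet_inl {Sa : Set U} {L : Set (List (TSym U))} (h : RecogG Sa L) :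
    RecogDet (Sum.inl '' Sa : Set (U ⊕ Set U)) (treeRel Sum.inl '' L) := by
  obtain ⟨Q, Qf, Q0, Δ, γ, hwf, rfl⟩ := h
  let M : Automaton U := ⟨Q0, Δ, γ, Qf⟩
  have hM : M.WF Sa Q := hwf
  exact ⟨_, _, _, _, hM.nwf_subsetAutomaton, Automaton.deterministic_subsetAutomatonRules,
    Automaton.isSimulation_subsetAutomaton.language_image hM⟩

end SubsetConstruction

section RenamingStates

variable {U V : Type}

/-- The renaming of a set of rules along `e`. -/
def mapRules (e : U → V) (Δ : Set (U × U × U)) : Set (V × V × V) :=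
  Prod.map e (Prod.map e e) '' Δ

variable {Sa Q Qf : Set U} {q0 : U} {Δ : Set (U × U × U)} {e : U → V}

theorem NWF.wf (h : NWF Sa Q Qf q0 Δ) : (Automaton.ofNFSTA q0 Δ Qf).WF Sa Q :=
  ⟨h.1, h.2.1, h.2.2.1, Set.singleton_subset_iff.2 h.2.2.2.1, h.2.2.2.2,
    fun _ => Set.singleton_subset_iff.2⟩

theorem NWF.map (h : NWF Sa Q Qf q0 Δ) (e : U → V) :
    NWF (e '' Sa) (e '' Q) (e '' Qf) (e q0) (mapRules e Δ) := by
  obtain ⟨hQ, hSa, hQf, hq0, hΔ⟩ := h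
  refine ⟨hQ.image e, Set.image_mono hSa, Set.image_mono hQf, Set.mem_image_of_mem e hq0, ?_⟩
  rintro _ ⟨p, hp, rfl⟩
  obtain ⟨h₁, h₂, h₃⟩ := hΔ p hp
  exact ⟨Set.mem_image_of_mem e h₁, Set.mem_image_of_mem e h₂, Set.mem_image_of_mem e h₃⟩

theorem Deterministic.map (hdet : Deterministic Δ) (hwf : NWF Sa Q Qf q0 Δ)
    (he : Set.InjOn e Q) : Deterministic (mapRules e Δ) := by
  rintro _ _ _ _ ⟨⟨a, b, c⟩, hc, ⟨⟩⟩ ⟨⟨a', b', c'⟩, hc', h⟩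
  obtain ⟨ha, hb, -⟩ := hwf.wf.rules_subset hc
  obtain ⟨ha', hb', -⟩ := hwf.wf.rules_subset hc'
  simp only [Prod.map, Prod.mk.injEq] at h
  obtain ⟨haa', hbb', rfl⟩ := h
  obtain rfl := he ha' ha haa'
  obtain rfl := he hb' hb hbb'
  rw [hdet _ _ _ _ hc hc']

namespace Automaton

theorem horizSet_mapRules (hwf : NWF Sa Q Qf q0 Δ) (he : Set.InjOn e Q) {A B : Set U}
    (hA : A ⊆ Q) (hB : B ⊆ Q) :
    (ofNFSTA (e q0) (mapRules e Δ) (e '' Qf)).horizSet (e '' A) (e '' B) =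
      e '' (ofNFSTA q0 Δ Qf).horizSet A B := by
  ext z
  constructor
  · rintro ⟨_, ⟨a, ha, rfl⟩, _, ⟨b, hb, rfl⟩, ⟨⟨a', b', c⟩, hΔ, h⟩⟩
    obtain ⟨ha', hb', -⟩ := hwf.wf.rules_subset hΔ
    simp only [Prod.map, Prod.mk.injEq] at h
    obtain ⟨haa', hbb', rfl⟩ := h
    obtain rfl := he ha' (hA ha) haa'
    obtain rfl := he hb' (hB hb) hbb'
    exact ⟨c, ⟨a', ha, b', hb, hΔ⟩, rfl⟩
  · rintro ⟨c, ⟨a, ha, b, hb, hΔ⟩, rfl⟩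
    exact ⟨e a, ⟨a, ha, rfl⟩, e b, ⟨b, hb, rfl⟩, (a, b, c), hΔ, rfl⟩

theorem isSimulation_mapRules (hwf : NWF Sa Q Qf q0 Δ) (he : Set.InjOn e Q) :
    IsSimulation (ofNFSTA q0 Δ Qf) (ofNFSTA (e q0) (mapRules e Δ) (e '' Qf)) Sa Q e
      (fun A => e '' A) where
  init := (Set.image_singleton).symm
  horizSet_letter A hA a ha := by
    rw [← Set.image_singleton]
    exact horizSet_mapRules hwf he hA (Set.singleton_subset_iff.2 (hwf.wf.alphabet_subset ha))
  horizSet_vertSet A hA C hC := by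
    rw [vertSet_ofNFSTA, vertSet_ofNFSTA]
    exact horizSet_mapRules hwf he hA hC
  final A hA := by
    have hinter := he.image_inter hA hwf.wf.final_subset
    exact hinter ▸ Set.image_nonempty

end Automaton

theorem nLang_map (hwf : NWF Sa Q Qf q0 Δ) (he : Set.InjOn e Q) :
    NLang (e '' Sa) (e q0) (mapRules e Δ) (e '' Qf) = treeRel e '' NLang Sa q0 Δ Qf :=
  (Automaton.isSimulation_mapRules hwf he).language_image hwf.wf

theorem RecogDet.map [Infinite V] {L : Set (List (TSym U))} (h : RecogDet Sa L) {f : U → V}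
    (hf : Set.InjOn f Sa) : RecogDet (f '' Sa) (treeRel f '' L) := by
  obtain ⟨Q, Qf, q0, Δ, hwf, hdet, rfl⟩ := h
  obtain ⟨e, he, hef⟩ := exists_injOn_eqOn hwf.wf.finite_states hwf.wf.alphabet_subset hf
  have htree : Set.EqOn (treeRel e) (treeRel f) (NLang Sa q0 Δ Qf) :=
    (treeRel_eqOn_treeSet hef).mono fun _ ht => ht.1
  rw [← hef.image_eq, ← htree.image_eq]
  exact ⟨_, _, _, _, hwf.map e, hdet.map hwf he, nLang_map hwf he⟩

end RenamingStates

section Equivalence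

variable {U V : Type} {Sa : Set U} {L : Set (List (TSym U))}

theorem RecogN.recogG (h : RecogN Sa L) : RecogG Sa L :=
  let ⟨Q, Qf, q0, Δ, hwf, hL⟩ := h
  ⟨Q, Qf, {q0}, Δ, fun a => {a}, hwf.wf, hL⟩

theorem RecogDet.recogN (h : RecogDet Sa L) : RecogN Sa L :=
  let ⟨Q, Qf, q0, Δ, hwf, _, hL⟩ := h
  ⟨Q, Qf, q0, Δ, hwf, hL⟩

theorem RecogG.recogDet [Infinite U] (h : RecogG Sa L) : RecogDet Sa L := by
  let f : U ⊕ Set U → U := Sum.elim id fun _ => Classical.arbitrary U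
  have hf : f ∘ Sum.inl = id := Sum.elim_comp_inl _ _
  have hinj : Set.InjOn f (Sum.inl '' Sa) :=
    Set.LeftInvOn.injOn (f₁' := Sum.inl) (by rintro _ ⟨a, -, rfl⟩; rfl)
  have hmap := h.recogDet_inl.map hinj
  rwa [← Set.image_comp, ← Set.image_comp, ← treeRel_comp, hf, treeRel_id, Set.image_id,
    Set.image_id] at hmap

theorem recogDet_image_iff [Infinite U] [Infinite V] {f : U → V} (hf : Set.InjOn f Sa)
    (hL : L ⊆ TreeSet Sa) : RecogDet (f '' Sa) (treeRel f '' L) ↔ RecogDet Sa L := by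
  refine ⟨fun h => ?_, fun h => h.map hf⟩
  have hinv : Set.EqOn (Function.invFunOn f Sa ∘ f) id Sa := hf.leftInvOn_invFunOn.eqOn
  have hSa : Function.invFunOn f Sa '' (f '' Sa) = Sa := by
    rw [← Set.image_comp, hinv.image_eq_self]
  have htree : treeRel (Function.invFunOn f Sa) '' (treeRel f '' L) = L := by
    rw [← Set.image_comp, ← treeRel_comp, ((treeRel_eqOn_treeSet hinv).mono hL).image_eq,
      treeRel_id, Set.image_id]
  have hmap := h.map (Function.invFunOn_injOn_image f Sa)
  rwa [hSa, htree] at hmap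

end Equivalence

theorem equivalence_of_automata_general {U V : Type} [Infinite U] [Infinite V] {Sa : Set U}
    {f : U → V} (hf : Set.InjOn f Sa) {L : Set (List (TSym U))} (hL : L ⊆ TreeSet Sa) :
    (RecogG Sa L ↔ RecogN Sa L) ∧ (RecogN Sa L ↔ RecogDet (f '' Sa) (treeRel f '' L)) :=
  ⟨⟨fun h => h.recogDet.recogN, RecogN.recogG⟩,
    (Iff.intro (fun h => h.recogG.recogDet) RecogDet.recogN).trans (recogDet_image_iff hf hL).symm⟩

/-- Deterministic, non-deterministic, and generalised finite
string tree automata recognise the same class of string tree languages: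
`L ⊆ T(Σ)` is recognised by some GNFSTA iff it is recognised by some NFSTA,
iff it is recognised (after the injective alphabet renaming `a ↦ {a}`) by
some DFSTA. -/
theorem equivalence_of_automata {U : Type} [Infinite U] (Sa : Set U)
    (hSa : Sa.Finite) (L : Set (List (TSym U))) (hL : L ⊆ TreeSet Sa) :
    (RecogG Sa L ↔ RecogN Sa L) ∧ (RecogN Sa L ↔ RecogD Sa L) :=
  equivalence_of_automata_general Set.singleton_injective.injOn hL

end StringTree
end

section
/- For any finite (string) automaton FA over Σ there exists an FSTA over Σ that recognises the vertical tree representation of FA's language: there is an NFSTA A with L(A) = ω(L(FA)) = {ω(s) | s ∈ L(FA)}, where ω maps each string to its vertical tree representation. -/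
namespace StringTree

/-! An NFSTA computes bottom-up: whatever the order of its moves, the value of `⟨x⟩` is found by
reading `x` from left to right from the initial state, each subtree acting as the letter that is its
own value. That no other sequence of moves leads further is seen by running words on a stack
automaton with one frame per open bracket: such runs can be pulled back along every move.

For vertical representations, a tree `⟨ω(s)a⟩` has to be evaluated. Reading the value of `ω(s)`
leads to a state that remembers the state of the string automaton after `s`, and reading `a`
performs its next step. The states entered by the first of these moves, those entered by the second
and the initial state are kept apart, so that a subtree can be read only at the start of a bracket
and a letter only after a subtree; this forces every tree that has a value to be of the form
`ω(s)`. -/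

theorem exists_embedding_forall_notMem {α β : Type*} [Countable α] [Infinite β] {S : Set β}
    (hS : S.Finite) : ∃ e : α ↪ β, ∀ x, e x ∉ S := by
  obtain ⟨f, hf⟩ := exists_injective_nat α
  let g := Set.Infinite.natEmbedding Sᶜ hS.infinite_compl
  exact ⟨⟨fun x => g (f x), Subtype.val_injective.comp (g.injective.comp hf)⟩, fun x => (g (f x)).2⟩

theorem append_append_mem_acceptsFrom_of_subset {α σ : Type*} {M : NFA α σ} {u v : List α}
    (huv : ∀ S, M.evalFrom S u ⊆ M.evalFrom S v) {S : Set σ} {l r : List α}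
    (h : l ++ u ++ r ∈ M.acceptsFrom S) : l ++ v ++ r ∈ M.acceptsFrom S := by
  rw [NFA.append_mem_acceptsFrom, NFA.evalFrom_append] at h ⊢
  rw [← Set.union_eq_self_of_subset_left (huv _), NFA.acceptsFrom_union]
  exact .inl h

theorem IsTree.content_induction {S : Set (TSym U)} {P : List (TSym U) → Prop} (nil : P [])
    (single : ∀ a ∈ S, P [a]) (append : ∀ x y, P x → P y → P (x ++ y))
    (encap : ∀ x, P x → P (TSym.op :: (x ++ [TSym.cl]))) {t : List (TSym U)} (ht : IsTree S t) :
    ∃ x, t = TSym.op :: (x ++ [TSym.cl]) ∧ P x := by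
  induction ht with
  | nil => exact ⟨[], rfl, nil⟩
  | single ha => exact ⟨_, rfl, single _ ha⟩
  | concat _ _ ihx ihy =>
    obtain ⟨x, hx, hPx⟩ := ihx
    obtain ⟨y, hy, hPy⟩ := ihy
    simp only [List.cons.injEq, true_and, List.append_cancel_right_eq] at hx hy
    subst hx hy
    exact ⟨_, rfl, append _ _ hPx hPy⟩
  | encap _ ih =>
    obtain ⟨x, rfl, hx⟩ := ih
    exact ⟨_, rfl, encap x hx⟩

theorem faSteps_concat_iff {δ : U → U → Set U} {q p : U} {s : List U} {a : U} :
    FASteps δ q (s ++ [a]) p ↔ ∃ r, FASteps δ q s r ∧ p ∈ δ r a := by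
  induction s generalizing q with
  | nil =>
    constructor
    · rintro (_ | ⟨h, ⟨⟩⟩)
      exact ⟨q, .nil q, h⟩
    · rintro ⟨_, ⟨⟩, h⟩
      exact .cons h (.nil _)
  | cons b s ih =>
    constructor
    · rintro (_ | ⟨h, h'⟩)
      obtain ⟨r, hr, hp⟩ := ih.1 h'
      exact ⟨r, .cons h hr, hp⟩
    · rintro ⟨r, _ | ⟨h, hr⟩, hp⟩
      exact .cons h (ih.2 ⟨r, hr, hp⟩)

theorem concat_mem_faLang_iff {Sa Qf : Set U} {δ : U → U → Set U} {q0 a : U} {s : List U} :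
    s ++ [a] ∈ FALang Sa δ q0 Qf ↔
      a ∈ Sa ∧ ∃ q, s ∈ FALang Sa δ q0 {q} ∧ ∃ p ∈ δ q a, p ∈ Qf := by
  simp only [FALang, Set.mem_ofPred_eq, faSteps_concat_iff, List.forall_mem_append,
    List.forall_mem_singleton, Set.mem_singleton_iff, exists_eq_left]
  grind

theorem omega_concat (s : List U) (a : U) :
    omega (s ++ [a]) = TSym.op :: (omega s ++ [TSym.ltr a] ++ [TSym.cl]) := by
  simp [omega, omegaRev]

section Evaluation

/-- The bottom-up semantics of an NFSTA over `Sa`: the state `c` is a value of the tree `⟨x⟩`. -/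
inductive Evaluates (Sa : Set U) (q0 : U) (Δ : Set (U × U × U)) : List (TSym U) → U → Prop where
  | nil : Evaluates Sa q0 Δ [] q0
  | letter {x : List (TSym U)} {a b c : U} : Evaluates Sa q0 Δ x a → b ∈ Sa → (a, b, c) ∈ Δ →
      Evaluates Sa q0 Δ (x ++ [TSym.ltr b]) c
  | tree {x y : List (TSym U)} {a b c : U} : Evaluates Sa q0 Δ x a → Evaluates Sa q0 Δ y b →
      (a, b, c) ∈ Δ → Evaluates Sa q0 Δ (x ++ TSym.op :: (y ++ [TSym.cl])) c

/-- The horizontal rules of an NFSTA, as the transition map of a string automaton. -/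
def horizStep (Δ : Set (U × U × U)) (a b : U) : Set U := {c | (a, b, c) ∈ Δ}

variable {Sa : Set U} {q0 : U} {Δ : Set (U × U × U)}

theorem Evaluates.mem_treeSet {x : List (TSym U)} {c : U} (h : Evaluates Sa q0 Δ x c) :
    TSym.op :: (x ++ [TSym.cl]) ∈ TreeSet Sa := by
  induction h with
  | nil => exact .nil
  | letter _ hb _ ih => exact .concat ih (.single ⟨_, hb, rfl⟩)
  | tree _ _ _ ihx ihy => exact .concat ihx (.encap ihy)

theorem GMove.context {Q0 : Set U} {γ : U → Set U} {w w' : List (TSym U)}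
    (h : GMove Q0 Δ γ w w') (l r : List (TSym U)) :
    GMove Q0 Δ γ (l ++ w ++ r) (l ++ w' ++ r) := by
  cases h with
  | @init l' r' s a ha =>
    simpa using GMove.init (Δ := Δ) (γ := γ) (l := l ++ l') (r := r' ++ r) (s := s) ha
  | @horiz l' r' s a b c hΔ =>
    simpa using GMove.horiz (Q0 := Q0) (γ := γ) (l := l ++ l') (r := r' ++ r) (s := s) hΔ
  | @vert l' r' a b hb =>
    simpa using GMove.vert (Q0 := Q0) (Δ := Δ) (l := l ++ l') (r := r' ++ r) hb

theorem reflTransGen_nMove_context {w w' : List (TSym U)}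
    (h : Relation.ReflTransGen (NMove q0 Δ) w w') (l r : List (TSym U)) :
    Relation.ReflTransGen (NMove q0 Δ) (l ++ w ++ r) (l ++ w' ++ r) :=
  h.lift (fun w => l ++ w ++ r) fun _ _ hm => GMove.context hm l r

theorem FASteps.reflTransGen_finalTree {s : List U} {a c : U} (h : FASteps (horizStep Δ) a s c) :
    Relation.ReflTransGen (NMove q0 Δ)
      ([TSym.op, TSym.ltr a, TSym.slash] ++ strOf s ++ [TSym.cl]) (finalTree c) := by
  induction h with
  | nil => exact .refl
  | @cons a b p s _ hp _ ih =>
    have hmove : NMove q0 Δ ([TSym.op, TSym.ltr a, TSym.slash] ++ strOf (b :: s) ++ [TSym.cl] ++ [])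
        ([TSym.op, TSym.ltr p, TSym.slash] ++ strOf s ++ [TSym.cl] ++ []) :=
      .horiz (l := []) hp
    simp only [List.append_nil] at hmove
    exact .head hmove ih

theorem reflTransGen_finalTree_of_strOf {x : List (TSym U)} {s : List U} {c : U}
    (hx : Relation.ReflTransGen (NMove q0 Δ) x (strOf s)) (hs : FASteps (horizStep Δ) q0 s c) :
    Relation.ReflTransGen (NMove q0 Δ) (TSym.op :: (x ++ [TSym.cl])) (finalTree c) := by
  have hinit : NMove q0 Δ ([TSym.op] ++ strOf s ++ [TSym.cl] ++ [])
      ([TSym.op, TSym.ltr q0, TSym.slash] ++ strOf s ++ [TSym.cl] ++ []) :=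
    .init (l := []) rfl
  simp only [List.append_nil] at hinit
  exact (reflTransGen_nMove_context hx [TSym.op] [TSym.cl]).trans
    (.head hinit hs.reflTransGen_finalTree)

theorem Evaluates.exists_reflTransGen_strOf {x : List (TSym U)} {c : U}
    (h : Evaluates Sa q0 Δ x c) :
    ∃ s, Relation.ReflTransGen (NMove q0 Δ) x (strOf s) ∧ FASteps (horizStep Δ) q0 s c := by
  induction h with
  | nil => exact ⟨[], .refl, .nil q0⟩
  | @letter x _ b _ _ _ hΔ ih =>
    obtain ⟨s, hx, hs⟩ := ih
    have hstr : strOf (s ++ [b]) = strOf s ++ [TSym.ltr b] := List.map_append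
    exact ⟨s ++ [b], hstr ▸ reflTransGen_nMove_context hx [] [TSym.ltr b],
      faSteps_concat_iff.2 ⟨_, hs, hΔ⟩⟩
  | @tree x y _ b _ _ _ hΔ ihx ihy =>
    obtain ⟨s, hx, hs⟩ := ihx
    obtain ⟨u, hy, hu⟩ := ihy
    have hsub : Relation.ReflTransGen (NMove q0 Δ) (TSym.op :: (y ++ [TSym.cl])) [TSym.ltr b] :=
      (reflTransGen_finalTree_of_strOf hy hu).tail (.vert (l := []) (r := []) rfl)
    have hright := reflTransGen_nMove_context hsub (strOf s) []
    simp only [List.append_nil] at hright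
    have hstr : strOf (s ++ [b]) = strOf s ++ [TSym.ltr b] := List.map_append
    exact ⟨s ++ [b], hstr ▸ (reflTransGen_nMove_context hx [] _).trans hright,
      faSteps_concat_iff.2 ⟨_, hs, hΔ⟩⟩

theorem Evaluates.reflTransGen_finalTree {x : List (TSym U)} {c : U}
    (h : Evaluates Sa q0 Δ x c) :
    Relation.ReflTransGen (NMove q0 Δ) (TSym.op :: (x ++ [TSym.cl])) (finalTree c) := by
  obtain ⟨s, hx, hs⟩ := h.exists_reflTransGen_strOf
  exact reflTransGen_finalTree_of_strOf hx hs

end Evaluation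

section Stack

/-- A stack frame, standing for an open bracket: `state a` if it is in the state `a`; `expect` if it
is assumed to be of the form `⟨a/⋯⟩` and nothing has been read; `pending a` once the `a` has been
read. The bottom frame, outside of all brackets, uses `expect` and `pending a` to record the value
of the whole tree. -/
inductive Frame (U : Type) : Type where
  | expect : Frame U
  | pending : U → Frame U
  | state : U → Frame U

/-- The effect on a frame of reading a plain symbol. -/
inductive FrameStep (Δ : Set (U × U × U)) : Frame U → U → Frame U → Prop where
  | expect (b : U) : FrameStep Δ .expect b (.pending b)
  | state {a b c : U} : (a, b, c) ∈ Δ → FrameStep Δ (.state a) b (.state c)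

/-- The transitions of the stack automaton. An opening bracket guesses whether the bracket contains
a slash, and a closing one makes the frame below read the value of the completed subtree. -/
inductive StackStep (q0 : U) (Δ : Set (U × U × U)) :
    List (Frame U) → TSym U → List (Frame U) → Prop where
  | opState (σ : List (Frame U)) : StackStep q0 Δ σ .op (.state q0 :: σ)
  | opExpect (σ : List (Frame U)) : StackStep q0 Δ σ .op (.expect :: σ)
  | ltr {k k' : Frame U} {b : U} {σ : List (Frame U)} :
      FrameStep Δ k b k' → StackStep q0 Δ (k :: σ) (.ltr b) (k' :: σ)
  | slash (a : U) (σ : List (Frame U)) : StackStep q0 Δ (.pending a :: σ) .slash (.state a :: σ)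
  | cl {k k' : Frame U} {b : U} {σ : List (Frame U)} :
      FrameStep Δ k b k' → StackStep q0 Δ (.state b :: k :: σ) .cl (k' :: σ)

/-- The stack automaton of an NFSTA, as a string automaton whose states are the stacks. -/
def stackNFA (q0 : U) (Δ : Set (U × U × U)) (Qf : Set U) : NFA (TSym U) (List (Frame U)) where
  step σ x := {τ | StackStep q0 Δ σ x τ}
  start := {[.expect]}
  accept := {τ | ∃ q ∈ Qf, τ = [.pending q]}

variable {Sa : Set U} {q0 : U} {Δ : Set (U × U × U)} {Qf : Set U}

theorem evalFrom_op_ltr_slash (S : Set (List (Frame U))) (a : U) :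
    (stackNFA q0 Δ Qf).evalFrom S [.op, .ltr a, .slash] = List.cons (.state a) '' S := by
  ext τ
  simp only [NFA.evalFrom_cons, NFA.evalFrom_nil, NFA.mem_stepSet]
  constructor
  · rintro ⟨_, ⟨_, ⟨σ, hσ, ⟨⟩ | ⟨⟩⟩, ⟨⟩ | ⟨⟩ | ⟨⟨⟩⟩⟩, ⟨⟩⟩
    exact ⟨σ, hσ, rfl⟩
  · rintro ⟨σ, hσ, rfl⟩
    exact ⟨_, ⟨_, ⟨σ, hσ, .opExpect σ⟩, .ltr (.expect a)⟩, .slash a σ⟩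

theorem evalFrom_op_ltr_slash_concat (S : Set (List (Frame U))) (a : U) (y : TSym U) :
    (stackNFA q0 Δ Qf).evalFrom S [.op, .ltr a, .slash, y] =
      (stackNFA q0 Δ Qf).stepSet (List.cons (.state a) '' S) y := by
  rw [← evalFrom_op_ltr_slash (q0 := q0) (Δ := Δ) (Qf := Qf)]
  rfl

theorem mem_acceptsFrom_of_nMove {w w' : List (TSym U)} {S : Set (List (Frame U))}
    (hm : NMove q0 Δ w w') (hw' : w' ∈ (stackNFA q0 Δ Qf).acceptsFrom S) :
    w ∈ (stackNFA q0 Δ Qf).acceptsFrom S := by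
  cases hm with
  | init ha =>
    obtain rfl := ha
    rw [List.append_assoc, List.append_assoc] at hw' ⊢
    refine append_append_mem_acceptsFrom_of_subset (fun T => ?_) hw'
    rw [evalFrom_op_ltr_slash, NFA.evalFrom_singleton]
    rintro _ ⟨σ, hσ, rfl⟩
    exact NFA.mem_stepSet.2 ⟨σ, hσ, .opState σ⟩
  | horiz hΔ =>
    rw [List.append_assoc, List.append_assoc] at hw' ⊢
    refine append_append_mem_acceptsFrom_of_subset (fun T => ?_) hw'
    rw [evalFrom_op_ltr_slash, evalFrom_op_ltr_slash_concat]
    rintro _ ⟨σ, hσ, rfl⟩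
    exact NFA.mem_stepSet.2 ⟨_, ⟨σ, hσ, rfl⟩, .ltr (.state hΔ)⟩
  | vert hb =>
    obtain rfl := hb
    refine append_append_mem_acceptsFrom_of_subset (fun T τ hτ => ?_) hw'
    rw [NFA.evalFrom_singleton, NFA.mem_stepSet] at hτ
    obtain ⟨_, hσ, ⟨⟩ | ⟨⟩ | hk⟩ := hτ
    rw [evalFrom_op_ltr_slash_concat, NFA.mem_stepSet]
    exact ⟨_, ⟨_, hσ, rfl⟩, .cl hk⟩

theorem NAccepts.mem_accepts {t : List (TSym U)} (h : NAccepts q0 Δ Qf t) :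
    t ∈ (stackNFA q0 Δ Qf).accepts := by
  obtain ⟨q, hq, hr⟩ := h
  rw [NFA.accepts_eq_acceptsFrom_start]
  induction hr using Relation.ReflTransGen.head_induction_on with
  | refl =>
    rw [NFA.mem_acceptsFrom, finalTree, evalFrom_op_ltr_slash_concat]
    exact ⟨_, ⟨q, hq, rfl⟩, NFA.mem_stepSet.2 ⟨_, ⟨_, rfl, rfl⟩, .cl (.expect q)⟩⟩
  | head hm _ ih => exact mem_acceptsFrom_of_nMove hm ih

variable (Sa q0 Δ) in
/-- The effect on the top frame of a run of the stack automaton over the content `x`: if the frame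
ends in the state `c`, it began in some state `a`, and `x` leads from `a` to `c`. The bottom-up
semantics reads from the initial state only, so `x` is put behind an arbitrary content `w` with
value `a`. -/
def FrameRun (k : Frame U) (x : List (TSym U)) (k' : Frame U) : Prop :=
  ∀ c, k' = .state c → ∃ a, k = .state a ∧
    ∀ w, Evaluates Sa q0 Δ w a → Evaluates Sa q0 Δ (w ++ x) c

variable (Sa q0 Δ Qf) in
/-- Runs of the stack automaton over the content `x` change only the top frame, and they do so in
accordance with the bottom-up semantics. -/
def StackSound (x : List (TSym U)) : Prop :=
  ∀ k σ, ∀ τ ∈ (stackNFA q0 Δ Qf).evalFrom {k :: σ} x,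
    ∃ k', τ = k' :: σ ∧ FrameRun Sa q0 Δ k x k'

theorem StackSound.nil : StackSound Sa q0 Δ Qf [] := by
  rintro k σ _ ⟨⟩
  exact ⟨k, rfl, fun c hk => ⟨c, hk, fun w hw => by rwa [List.append_nil]⟩⟩

theorem StackSound.letter {a : U} (ha : a ∈ Sa) : StackSound Sa q0 Δ Qf [.ltr a] := by
  intro k σ τ hτ
  rw [NFA.evalFrom_singleton, NFA.stepSet_singleton] at hτ
  obtain ⟨⟩ | ⟨⟩ | hk := hτ
  refine ⟨_, rfl, ?_⟩
  rintro c rfl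
  obtain ⟨⟩ | hΔ := hk
  exact ⟨_, rfl, fun w hw => hw.letter ha hΔ⟩

theorem StackSound.append {x y : List (TSym U)} (hx : StackSound Sa q0 Δ Qf x)
    (hy : StackSound Sa q0 Δ Qf y) : StackSound Sa q0 Δ Qf (x ++ y) := by
  intro k σ τ hτ
  rw [NFA.evalFrom_append, NFA.mem_evalFrom_iff_exists] at hτ
  obtain ⟨ρ, hρ, hτ⟩ := hτ
  obtain ⟨k₁, rfl, hk₁⟩ := hx k σ ρ hρ
  obtain ⟨k₂, rfl, hk₂⟩ := hy k₁ σ τ hτ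
  refine ⟨k₂, rfl, fun c hc => ?_⟩
  obtain ⟨b, hb, hyb⟩ := hk₂ c hc
  obtain ⟨a, ha, hxa⟩ := hk₁ b hb
  exact ⟨a, ha, fun w hw => List.append_assoc w x y ▸ hyb _ (hxa w hw)⟩

/-- A tree acts on the stack as a letter does, namely as one of its values. -/
theorem StackSound.exists_evaluates {x : List (TSym U)} (hx : StackSound Sa q0 Δ Qf x)
    {σ τ : List (Frame U)}
    (hτ : τ ∈ (stackNFA q0 Δ Qf).evalFrom {σ} (.op :: (x ++ [.cl]))) :
    ∃ b, Evaluates Sa q0 Δ x b ∧ StackStep q0 Δ σ (.ltr b) τ := by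
  rw [NFA.evalFrom_cons, NFA.stepSet_singleton, NFA.evalFrom_append, NFA.evalFrom_singleton,
    NFA.mem_stepSet] at hτ
  obtain ⟨ρ, hρ, hcl⟩ := hτ
  obtain ⟨_, hop, hρ⟩ := NFA.mem_evalFrom_iff_exists.1 hρ
  cases hop with
  | opState =>
    obtain ⟨_, rfl, hrun⟩ := hx _ σ ρ hρ
    obtain _ | _ | _ | _ | hstep := hcl
    obtain ⟨_, ⟨⟩, hxa⟩ := hrun _ rfl
    exact ⟨_, hxa [] .nil, .ltr hstep⟩
  | opExpect =>
    obtain ⟨_, rfl, hrun⟩ := hx _ σ ρ hρ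
    obtain _ | _ | _ | _ | hstep := hcl
    obtain ⟨_, ⟨⟩, -⟩ := hrun _ rfl

theorem StackSound.tree {x : List (TSym U)} (hx : StackSound Sa q0 Δ Qf x) :
    StackSound Sa q0 Δ Qf (.op :: (x ++ [.cl])) := by
  intro k σ τ hτ
  obtain ⟨b, hb, hstep⟩ := hx.exists_evaluates hτ
  obtain ⟨⟩ | ⟨⟩ | hk := hstep
  refine ⟨_, rfl, ?_⟩
  rintro c rfl
  obtain ⟨⟩ | hΔ := hk
  exact ⟨_, rfl, fun w hw => hw.tree hb hΔ⟩

theorem mem_nLang_iff {t : List (TSym U)} :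
    t ∈ NLang Sa q0 Δ Qf ↔
      ∃ x, t = TSym.op :: (x ++ [TSym.cl]) ∧ ∃ q ∈ Qf, Evaluates Sa q0 Δ x q := by
  constructor
  · rintro ⟨ht, hacc⟩
    obtain ⟨x, rfl, hx⟩ : ∃ x, t = TSym.op :: (x ++ [TSym.cl]) ∧ StackSound Sa q0 Δ Qf x :=
      IsTree.content_induction .nil (by rintro _ ⟨a, ha, rfl⟩; exact .letter ha)
        (fun _ _ => .append) (fun _ => .tree) ht
    obtain ⟨_, ⟨q, hq, rfl⟩, hrun⟩ := NAccepts.mem_accepts hacc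
    obtain ⟨b, hb, hstep⟩ := hx.exists_evaluates hrun
    obtain ⟨⟩ | ⟨⟩ | ⟨⟨⟩⟩ := hstep
    exact ⟨x, rfl, q, hq, hb⟩
  · rintro ⟨x, rfl, q, hq, hx⟩
    exact ⟨hx.mem_treeSet, q, hq, hx.reflTransGen_finalTree⟩

end Stack

section Vertical

/-- The non-letter states of the tree automaton for vertical representations: `value o` is a value
of a tree `ω(s)`, and `context o` is the state reached inside a bracket after reading that tree. The
index is `some q` for a state `q` reached by a nonempty string `s`, and `none` for `s = ε`; thus
`value none` is the initial state. -/
inductive VertState (P : Type) : Type where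
  | value : Option P → VertState P
  | context : Option P → VertState P

instance {P : Type} [Finite P] : Finite (VertState P) :=
  .of_surjective (Sum.elim .value .context) <| by
    rintro (o | o)
    exacts [⟨.inl o, rfl⟩, ⟨.inr o, rfl⟩]

/-- The state of the string automaton recorded by an index of `VertState`. -/
def stringState {Q : Set U} (q0 : U) (o : Option Q) : U := o.elim q0 (↑)

/-- The rules of the tree automaton for vertical representations, with its states encoded in `U`
by `e`. -/
def vertRules {Q : Set U} (Sa : Set U) (δ : U → U → Set U) (q0 : U) (e : VertState Q → U) :
    Set (U × U × U) :=
  {r | (∃ o, r = (e (.value none), e (.value o), e (.context o))) ∨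
    ∃ o, ∃ a ∈ Sa, ∃ p : Q, ↑p ∈ δ (stringState q0 o) a ∧
      r = (e (.context o), a, e (.value (some p)))}

/-- The contents that can be read in a given state of the tree automaton. -/
def VertContent {Q : Set U} (Sa : Set U) (δ : U → U → Set U) (q0 : U) :
    VertState Q → List (TSym U) → Prop
  | .value none, x => x = []
  | .value (some p), x => ∃ s ∈ FALang Sa δ q0 {↑p}, TSym.op :: (x ++ [TSym.cl]) = omega s
  | .context o, x => ∃ s ∈ FALang Sa δ q0 {stringState q0 o}, x = omega s

variable {Sa Q : Set U} {δ : U → U → Set U} {q0 : U}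

theorem VertContent.exists_omega {o : Option Q} {x : List (TSym U)}
    (h : VertContent Sa δ q0 (.value o) x) :
    ∃ s ∈ FALang Sa δ q0 {stringState q0 o}, TSym.op :: (x ++ [TSym.cl]) = omega s := by
  cases o with
  | none =>
    obtain rfl : x = [] := h
    exact ⟨[], ⟨by simp, q0, rfl, .nil q0⟩, rfl⟩
  | some p => exact h

theorem Evaluates.exists_vertContent {e : VertState Q → U} (he : e.Injective)
    (heS : ∀ v, e v ∉ Sa) {x : List (TSym U)} {c : U}
    (h : Evaluates Sa (e (.value none)) (vertRules Sa δ q0 e) x c) :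
    ∃ v, c = e v ∧ VertContent Sa δ q0 v x := by
  induction h with
  | nil => exact ⟨.value none, rfl, rfl⟩
  | letter _ hb hΔ ih =>
    obtain ⟨v, rfl, hv⟩ := ih
    obtain ⟨o, hr⟩ | ⟨o, a, ha, p, hp, hr⟩ := hΔ <;> simp only [Prod.mk.injEq, he.eq_iff] at hr
    · exact absurd (hr.2.1 ▸ hb) (heS _)
    · obtain ⟨rfl, rfl, rfl⟩ := hr
      obtain ⟨s, hs, rfl⟩ := hv
      exact ⟨_, rfl, s ++ [_], concat_mem_faLang_iff.2 ⟨ha, _, hs, p, hp, rfl⟩,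
        (omega_concat s _).symm⟩
  | tree _ _ hΔ ihx ihy =>
    obtain ⟨v, rfl, hv⟩ := ihx
    obtain ⟨v', rfl, hv'⟩ := ihy
    obtain ⟨o, hr⟩ | ⟨o, a, ha, p, -, hr⟩ := hΔ <;> simp only [Prod.mk.injEq, he.eq_iff] at hr
    · obtain ⟨rfl, rfl, rfl⟩ := hr
      obtain rfl := hv
      exact ⟨_, rfl, hv'.exists_omega⟩
    · exact absurd (hr.2.1 ▸ ha) (heS _)

theorem exists_evaluates_of_mem_faLang (hδ : ∀ q a, δ q a ⊆ Q) (e : VertState Q → U) {s : List U}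
    {p : U} (hs : s ∈ FALang Sa δ q0 {p}) :
    ∃ o x, stringState q0 o = p ∧ TSym.op :: (x ++ [TSym.cl]) = omega s ∧
      Evaluates Sa (e (.value none)) (vertRules Sa δ q0 e) x (e (.value o)) := by
  induction s using List.reverseRecOn generalizing p with
  | nil =>
    obtain ⟨-, _, rfl, ⟨⟩⟩ := hs
    exact ⟨none, [], rfl, rfl, .nil⟩
  | append_singleton s a ih =>
    obtain ⟨ha, q, hq, _, hp, rfl⟩ := concat_mem_faLang_iff.1 hs
    obtain ⟨o, x, rfl, hx, hev⟩ := ih hq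
    have hsub : Evaluates Sa (e (.value none)) (vertRules Sa δ q0 e) (omega s) (e (.context o)) :=
      hx ▸ .tree .nil hev (.inl ⟨o, rfl⟩)
    let p' : Q := ⟨_, hδ _ _ hp⟩
    exact ⟨some p', omega s ++ [.ltr a], rfl, (omega_concat s a).symm,
      hsub.letter ha (.inr ⟨o, a, ha, p', hp, rfl⟩)⟩

theorem nLang_vertRules {e : VertState Q → U} (he : e.Injective) (heS : ∀ v, e v ∉ Sa)
    (hδ : ∀ q a, δ q a ⊆ Q) (Qf : Set U) :
    NLang Sa (e (.value none)) (vertRules Sa δ q0 e)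
      {b | ∃ o, b = e (.value o) ∧ stringState q0 o ∈ Qf} = omega '' FALang Sa δ q0 Qf := by
  ext t
  rw [mem_nLang_iff]
  constructor
  · rintro ⟨x, rfl, _, ⟨o, rfl, ho⟩, hx⟩
    obtain ⟨_, hv, hcont⟩ := hx.exists_vertContent he heS
    obtain rfl := he hv
    obtain ⟨s, ⟨hs, _, rfl, hrun⟩, hω⟩ := hcont.exists_omega
    exact ⟨s, ⟨hs, _, ho, hrun⟩, hω.symm⟩
  · rintro ⟨s, ⟨hs, p, hp, hrun⟩, rfl⟩
    obtain ⟨o, x, rfl, hx, hev⟩ := exists_evaluates_of_mem_faLang hδ e ⟨hs, p, rfl, hrun⟩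
    exact ⟨x, hx.symm, _, ⟨o, rfl, hp⟩, hev⟩

theorem nwf_vertRules [Finite Q] (hSa : Sa.Finite) (δ : U → U → Set U) (q0 : U)
    (e : VertState Q → U) (Qf : Set U) :
    NWF Sa (Sa ∪ Set.range e) {b | ∃ o, b = e (.value o) ∧ stringState q0 o ∈ Qf}
      (e (.value none)) (vertRules Sa δ q0 e) := by
  refine ⟨hSa.union (Set.finite_range e), Set.subset_union_left, ?_, .inr ⟨_, rfl⟩, ?_⟩
  · rintro _ ⟨o, rfl, -⟩
    exact .inr ⟨_, rfl⟩
  · rintro _ (⟨o, rfl⟩ | ⟨o, a, ha, p, -, rfl⟩)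
    · exact ⟨.inr ⟨_, rfl⟩, .inr ⟨_, rfl⟩, .inr ⟨_, rfl⟩⟩
    · exact ⟨.inr ⟨_, rfl⟩, .inl ha, .inr ⟨_, rfl⟩⟩

end Vertical

/-- For any finite (string) automaton `FA` over `Σ` there
exists an FSTA over `Σ` that recognises the vertical tree representation of
`FA`'s language: there is an NFSTA `A` with
`L(A) = ω(L(FA)) = {ω(s) | s ∈ L(FA)}`. -/
theorem fa_vertical_representation {U : Type} [Infinite U] (Sa Q Qf : Set U)
    (q0 : U) (δ : U → U → Set U)
    (hSa : Sa.Finite) (hQ : Q.Finite) (hQf : Qf ⊆ Q) (hq0 : q0 ∈ Q)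
    (hδ : ∀ q a, δ q a ⊆ Q) :
    ∃ (Q' Qf' : Set U) (q0' : U) (Δ : Set (U × U × U)),
      NWF Sa Q' Qf' q0' Δ ∧
      NLang Sa q0' Δ Qf' = omega '' FALang Sa δ q0 Qf := by
  have : Finite Q := hQ
  obtain ⟨e, heS⟩ := exists_embedding_forall_notMem (α := VertState Q) hSa
  exact ⟨_, _, _, _, nwf_vertRules hSa δ q0 e Qf, nLang_vertRules e.injective heS hδ Qf⟩

end StringTree
end
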